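/- arXiv:1603.07789 — 2 statements merged into one kernel-verified Lean document; each statement's English description precedes it below -/
import Mathlib

section
/- Let T > 0, let (Ω, F, P) be a probability space with a filtration (F_t)_{t∈[0,T]}, let 1 < ν ≤ q̄ < ∞, and set μ = ν/(ν−1) and p̄ = q̄/(q̄−1). Let φ : [0,T] × Ω → ℝ^m be jointly measurable with E[(∫₀^T |φ(t)|^ν dt)^{q̄/ν}] < ∞. Let M : [0,T] × Ω → [0,∞) be an adapted, jointly measurable process with right-continuous sample paths such that for each t ∈ [0,T], M(t) is a version of the conditional expectation E[ (∫₀^T |φ(s)|^ν ds)^{(q̄−ν)/ν} · 1_{{∫₀^T |φ(s)|^ν ds ≠ 0}} | F_t ]. Then E[(∫₀^T (M(t)·|φ(t)|^{ν−1})^μ dt)^{p̄/μ}] ≤ (q̄/ν)^{q̄/(q̄−1)} · E[(∫₀^T |φ(t)|^ν dt)^{q̄/ν}] < ∞. In particular, the process t ↦ M(t)|φ(t)|^{ν−2}φ(t) belongs to L^{p̄}(Ω; L^{μ}(0,T; ℝ^m)). -/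
open MeasureTheory ENNReal

/-- Euclidean norm on `Fin k → ℝ`. -/
noncomputable def eucNorm {k : ℕ} (v : Fin k → ℝ) : ℝ := Real.sqrt (∑ i, v i ^ 2)

/-! Pointwise in `ω`, bounding `M t` by `Z = sup_t M t` in the time integral leaves
`Z ^ p̄ * A ^ (p̄ / μ)` with `A = ∫ |φ| ^ ν`. If `ν = q̄`, the conditioned variable is at most `1`,
hence so is `Z`. If `ν < q̄`, Doob's maximal inequality in `L^r` with `r = q̄ / (q̄ - ν)`, whose
conjugate exponent is `q̄ / ν`, and the conditional Jensen inequality give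
`E[Z ^ r] ≤ (q̄ / ν) ^ r * E[A ^ (q̄ / ν)]`. Since `p̄ < r`, Hölder's inequality with exponents
`r / p̄ = (q̄ - 1) / (q̄ - ν)` and `(q̄ - 1) / (ν - 1)` then bounds `E[Z ^ p̄ * A ^ (p̄ / μ)]`. -/

open Filter TopologicalSpace

section MaximalInequality

variable {Ω ι : Type*} {m0 : MeasurableSpace Ω} {P : Measure Ω}

/-- Doob's weak-type inequality `ε P(X ≥ ε) ≤ E[Y; X ≥ ε]` for all `ε > 0`: the information on
a maximal function `X` from which its `L^r` bound by `Y` is derived. -/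
def TailDominated (P : Measure Ω) (X : Ω → ℝ) (Y : Ω → ℝ≥0∞) : Prop :=
  ∀ ε : ℝ, 0 < ε → ENNReal.ofReal ε * P {ω | ε ≤ X ω} ≤ ∫⁻ ω in {ω | ε ≤ X ω}, Y ω ∂P

variable {X : Ω → ℝ} {Y : Ω → ℝ≥0∞} {r s : ℝ}

theorem TailDominated.min_const (h : TailDominated P X Y) (K : ℝ) :
    TailDominated P (fun ω => min (X ω) K) Y := by
  intro ε hε
  by_cases hεK : ε ≤ K
  · simpa only [le_min_iff, hεK, and_true] using h ε hε
  · simp only [le_min_iff, hεK, and_false, Set.ofPred_false, measure_empty, mul_zero, zero_le]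

theorem TailDominated.lintegral_rpow_le_lintegral_mul (h : TailDominated P X Y) (hX0 : 0 ≤ X)
    (hX : Measurable X) (hY : Measurable Y) (hrs : r.HolderConjugate s) :
    ∫⁻ ω, ENNReal.ofReal (X ω) ^ r ∂P ≤
      ENNReal.ofReal s * ∫⁻ ω, Y ω * ENNReal.ofReal (X ω) ^ (r - 1) ∂P := by
  have hr1 : 0 < r - 1 := hrs.sub_one_pos
  have hrs' : r = s * (r - 1) := by rw [mul_comm, hrs.sub_one_mul_conj]
  have tail_le : ∀ t ∈ Set.Ioi (0 : ℝ), P {ω | t ≤ X ω} * ENNReal.ofReal (t ^ (r - 1)) ≤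
      P.withDensity Y {ω | t ≤ X ω} * ENNReal.ofReal (t ^ (r - 1 - 1)) := by
    intro t ht
    have ht : 0 < t := ht
    have ht_pow : t ^ (r - 1) = t * t ^ (r - 1 - 1) := by
      rw [mul_comm, Real.rpow_sub_one ht.ne' (r - 1), div_mul_cancel₀ _ ht.ne']
    rw [ht_pow, ENNReal.ofReal_mul ht.le, ← mul_assoc,
      mul_comm (P _), withDensity_apply _ (measurableSet_le measurable_const hX)]
    gcongr
    exact h t ht
  calc ∫⁻ ω, ENNReal.ofReal (X ω) ^ r ∂P
      = ENNReal.ofReal r *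
          ∫⁻ t in Set.Ioi 0, P {ω | t ≤ X ω} * ENNReal.ofReal (t ^ (r - 1)) := by
        rw [← lintegral_rpow_eq_lintegral_meas_le_mul _ (.of_forall hX0) hX.aemeasurable hrs.pos]
        exact lintegral_congr fun ω => ENNReal.ofReal_rpow_of_nonneg (hX0 ω) hrs.nonneg
    _ ≤ ENNReal.ofReal s * (ENNReal.ofReal (r - 1) *
          ∫⁻ t in Set.Ioi 0, P.withDensity Y {ω | t ≤ X ω} *
            ENNReal.ofReal (t ^ (r - 1 - 1))) := by
        rw [← mul_assoc, ← ENNReal.ofReal_mul hrs.symm.nonneg, ← hrs']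
        gcongr ENNReal.ofReal r * ?_
        exact setLIntegral_mono' measurableSet_Ioi tail_le
    _ = ENNReal.ofReal s * ∫⁻ ω, Y ω * ENNReal.ofReal (X ω) ^ (r - 1) ∂P := by
        rw [← lintegral_rpow_eq_lintegral_meas_le_mul _ (.of_forall hX0) hX.aemeasurable hr1,
          lintegral_withDensity_eq_lintegral_mul P hY (by fun_prop)]
        simp only [Pi.mul_apply, ENNReal.ofReal_rpow_of_nonneg (hX0 _) hr1.le]

theorem le_rpow_mul_of_le_mul_rpow_mul_rpow {A B c : ℝ≥0∞} (hrs : r.HolderConjugate s)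
    (hA : A ≠ ⊤) (h : A ≤ c * (B ^ (1 / r) * A ^ (1 / s))) : A ≤ c ^ r * B := by
  have hr := hrs.nonneg
  rcases eq_or_ne A 0 with rfl | hA0
  · exact zero_le
  have hA_split : A = A ^ (1 / r) * A ^ (1 / s) := by
    rw [← ENNReal.rpow_add _ _ hA0 hA, hrs.one_div_add_one_div, div_one, ENNReal.rpow_one]
  have hroot : A ^ (1 / r) ≤ c * B ^ (1 / r) := by
    rw [← ENNReal.mul_le_mul_iff_left (ENNReal.rpow_pos (pos_iff_ne_zero.2 hA0) hA).ne'
      (ENNReal.rpow_ne_top_of_nonneg hrs.symm.one_div_nonneg hA), ← hA_split, mul_assoc]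
    exact h
  calc A = (A ^ (1 / r)) ^ r := by rw [← ENNReal.rpow_mul, one_div_mul_cancel hrs.ne_zero,
            ENNReal.rpow_one]
    _ ≤ (c * B ^ (1 / r)) ^ r := by gcongr
    _ = c ^ r * B := by
        rw [ENNReal.mul_rpow_of_nonneg _ _ hrs.nonneg, ← ENNReal.rpow_mul,
          one_div_mul_cancel hrs.ne_zero, ENNReal.rpow_one]

theorem TailDominated.lintegral_rpow_le_of_ne_top (h : TailDominated P X Y) (hX0 : 0 ≤ X)
    (hX : Measurable X) (hY : Measurable Y) (hrs : r.HolderConjugate s)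
    (hfin : ∫⁻ ω, ENNReal.ofReal (X ω) ^ r ∂P ≠ ⊤) :
    ∫⁻ ω, ENNReal.ofReal (X ω) ^ r ∂P ≤ ENNReal.ofReal s ^ r * ∫⁻ ω, Y ω ^ r ∂P := by
  refine le_rpow_mul_of_le_mul_rpow_mul_rpow hrs hfin
    ((h.lintegral_rpow_le_lintegral_mul hX0 hX hY hrs).trans ?_)
  have holder := ENNReal.lintegral_mul_le_Lp_mul_Lq P hrs hY.aemeasurable
    (g := fun ω => ENNReal.ofReal (X ω) ^ (r - 1)) (by fun_prop)
  simp only [← ENNReal.rpow_mul, hrs.sub_one_mul_conj] at holder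
  gcongr
  exact holder

-- Truncation makes the left side finite, so that it can be absorbed, and preserves the tail bound.
theorem TailDominated.lintegral_rpow_le [IsFiniteMeasure P] (h : TailDominated P X Y)
    (hX0 : 0 ≤ X) (hX : Measurable X) (hY : Measurable Y) (hrs : r.HolderConjugate s) :
    ∫⁻ ω, ENNReal.ofReal (X ω) ^ r ∂P ≤ ENNReal.ofReal s ^ r * ∫⁻ ω, Y ω ^ r ∂P := by
  have hr := hrs.nonneg
  have trunc_tendsto : Tendsto (fun n : ℕ => ∫⁻ ω, ENNReal.ofReal (min (X ω) n) ^ r ∂P) atTop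
      (nhds (∫⁻ ω, ENNReal.ofReal (X ω) ^ r ∂P)) := by
    refine lintegral_tendsto_of_tendsto_of_monotone (fun n => by fun_prop)
      (.of_forall fun ω i j hij => by dsimp only; gcongr) (.of_forall fun ω => ?_)
    refine tendsto_const_nhds.congr' ?_
    filter_upwards [tendsto_natCast_atTop_atTop.eventually_ge_atTop (X ω)] with n hn
    rw [min_eq_left hn]
  refine le_of_tendsto' trunc_tendsto fun n => ?_
  refine (h.min_const n).lintegral_rpow_le_of_ne_top (fun ω => le_min (hX0 ω) n.cast_nonneg)
    (by fun_prop) hY hrs (ne_top_of_le_ne_top ?_ (lintegral_mono fun ω =>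
      ENNReal.rpow_le_rpow (ENNReal.ofReal_le_ofReal (min_le_right (X ω) n)) hr))
  simp [ENNReal.mul_eq_top, hr, ENNReal.rpow_eq_top_iff]

theorem exists_monotone_image_range_eq [LinearOrder ι] {s : Finset ι} (hs : s.Nonempty) :
    ∃ (n : ℕ) (e : ℕ → ι), Monotone e ∧ (Finset.range (n + 1)).image e = s := by
  have hcard : 0 < s.card := hs.card_pos
  refine ⟨s.card - 1, fun k => s.orderEmbOfFin rfl ⟨min k (s.card - 1), by lia⟩,
    fun i j hij => (s.orderEmbOfFin rfl).monotone (Fin.mk_le_mk.2 (by gcongr)), ?_⟩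
  ext t
  rw [← Finset.mem_coe (s := s), ← s.range_orderEmbOfFin rfl]
  simp only [Finset.mem_image, Finset.mem_range, Set.mem_range]
  constructor
  · rintro ⟨k, -, rfl⟩
    exact ⟨_, rfl⟩
  · rintro ⟨k, rfl⟩
    refine ⟨k, by lia, ?_⟩
    congr 1
    ext
    dsimp only
    lia

/-- The filtration `k ↦ ℱ (e k)` obtained from a monotone change of time `e`, used to sample a
process along finitely many times and to restrict it to an interval of times. -/
def reindexFiltration {κ : Type*} [Preorder ι] [Preorder κ] (ℱ : Filtration ι m0) {e : κ → ι}
    (he : Monotone e) : Filtration κ m0 where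
  seq k := ℱ (e k)
  mono' _ _ hij := ℱ.mono (he hij)
  le' k := ℱ.le (e k)

theorem submartingale_comp_monotone {κ : Type*} [Preorder ι] [Preorder κ] {ℱ : Filtration ι m0}
    {f : ι → Ω → ℝ} (hf : Submartingale f ℱ P) {e : κ → ι} (he : Monotone e) :
    Submartingale (fun k => f (e k)) (reindexFiltration ℱ he) P :=
  ⟨fun k => hf.1 (e k), fun _ _ hij => hf.2.1 _ _ (he hij), fun k => hf.2.2 (e k)⟩

theorem tailDominated_sup'_of_submartingale [IsFiniteMeasure P] [LinearOrder ι]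
    {ℱ : Filtration ι m0} {f : ι → Ω → ℝ} (hf : Submartingale f ℱ P) (hf0 : 0 ≤ f)
    {s : Finset ι} (hs : s.Nonempty) :
    TailDominated P (fun ω => s.sup' hs fun t => f t ω) (fun ω => ‖f (s.max' hs) ω‖ₑ) := by
  intro ε hε
  obtain ⟨n, e, he, rfl⟩ := exists_monotone_image_range_eq hs
  have hmax : ((Finset.range (n + 1)).image e).max' hs = e n := by
    refine (Finset.isGreatest_max' _ _).unique ⟨?_, ?_⟩
    · simpa only [Finset.coe_image] using Set.mem_image_of_mem e (Finset.self_mem_range_succ n)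
    · simp only [mem_upperBounds, Finset.coe_image, Set.forall_mem_image, Finset.mem_coe,
        Finset.mem_range_succ_iff]
      exact fun k hk => he hk
  have hdoob := maximal_ineq (submartingale_comp_monotone hf he) (fun k => hf0 (e k))
    (ε := ε.toNNReal) n
  rw [Real.coe_toNNReal _ hε.le, ofReal_integral_eq_lintegral_ofReal (hf.2.2 _).integrableOn
    (.of_forall (hf0 _))] at hdoob
  simp only [Finset.sup'_image, hmax, Function.comp_def, Real.enorm_of_nonneg (hf0 _ _)]
  exact hdoob

theorem lintegral_finset_sup_rpow_le_of_submartingale [IsFiniteMeasure P] [LinearOrder ι]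
    {ℱ : Filtration ι m0} {f : ι → Ω → ℝ} (hf : Submartingale f ℱ P) (hf0 : 0 ≤ f)
    (hrs : r.HolderConjugate s) {b : ι} (hb : IsTop b) (u : Finset ι) :
    ∫⁻ ω, (u.sup fun t => ‖f t ω‖ₑ) ^ r ∂P ≤ ENNReal.ofReal s ^ r * ∫⁻ ω, ‖f b ω‖ₑ ^ r ∂P := by
  have hr := hrs.nonneg
  have hmeas : ∀ t, Measurable (f t) := fun t =>
    (hf.stronglyMeasurable t).measurable.mono (ℱ.le t) le_rfl
  have hne := u.insert_nonempty b
  have hmax : (insert b u).max' hne = b :=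
    le_antisymm (hb _) (Finset.le_max' _ _ (Finset.mem_insert_self b u))
  have hsup : ∀ ω, u.sup (fun t => ‖f t ω‖ₑ) ≤
      ENNReal.ofReal ((insert b u).sup' hne fun t => f t ω) := fun ω =>
    Finset.sup_le fun t ht => by
      rw [Real.enorm_of_nonneg (hf0 t ω)]
      exact ENNReal.ofReal_le_ofReal
        (Finset.le_sup' (fun t => f t ω) (Finset.mem_insert_of_mem ht))
  have htail := tailDominated_sup'_of_submartingale hf hf0 hne
  rw [hmax] at htail
  calc ∫⁻ ω, (u.sup fun t => ‖f t ω‖ₑ) ^ r ∂P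
      ≤ ∫⁻ ω, ENNReal.ofReal ((insert b u).sup' hne fun t => f t ω) ^ r ∂P := by
        gcongr with ω
        exact hsup ω
    _ ≤ ENNReal.ofReal s ^ r * ∫⁻ ω, ‖f b ω‖ₑ ^ r ∂P :=
        htail.lintegral_rpow_le
          (fun ω => (hf0 b ω).trans (Finset.le_sup' (fun t => f t ω) (Finset.mem_insert_self b u)))
          (by simpa only [← Finset.sup'_apply] using Finset.measurable_sup' hne fun t _ => hmeas t)
          (hmeas b).enorm hrs

theorem lintegral_iSup_rpow_le_of_finset_sup [Countable ι] {g : ι → Ω → ℝ≥0∞}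
    (hg : ∀ i, Measurable (g i)) (hr : 0 < r) {C : ℝ≥0∞}
    (h : ∀ u : Finset ι, ∫⁻ ω, (u.sup fun i => g i ω) ^ r ∂P ≤ C) :
    ∫⁻ ω, (⨆ i, g i ω) ^ r ∂P ≤ C := by
  have hsup : ∀ ω, (⨆ i, g i ω) ^ r = ⨆ u : Finset ι, (u.sup fun i => g i ω) ^ r := fun ω => by
    simpa only [Finset.sup_eq_iSup, ← iSup_eq_iSup_finset, ENNReal.orderIsoRpow_apply] using
      (ENNReal.orderIsoRpow r hr).map_iSup fun u : Finset ι => u.sup fun i => g i ω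
  have hmono : Monotone fun (u : Finset ι) ω => (u.sup fun i => g i ω) ^ r :=
    fun u v huv ω => ENNReal.rpow_le_rpow (Finset.sup_mono huv) hr.le
  simp only [hsup]
  rw [lintegral_iSup_directed (fun u => ?_) hmono.directed_le]
  · exact iSup_le h
  · simp only [Finset.sup_eq_iSup]; fun_prop

-- A dense set may miss a point `x` with an immediate successor `y`, for which `Ico x y = {x}`.
theorem exists_countable_forall_lt_Ico_inter_nonempty (ι : Type*) [LinearOrder ι]
    [TopologicalSpace ι] [OrderTopology ι] [SecondCountableTopology ι] :
    ∃ D : Set ι, D.Countable ∧ ∀ x y, x < y → (Set.Ico x y ∩ D).Nonempty := by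
  obtain ⟨D, hD, hD_dense⟩ := exists_countable_dense ι
  refine ⟨D ∪ {x | ∃ y, x ⋖ y}, hD.union countable_setOfPred_covBy_right, fun x y hxy => ?_⟩
  by_cases hcov : x ⋖ y
  · exact ⟨x, ⟨le_rfl, hxy⟩, Or.inr ⟨y, hcov⟩⟩
  · obtain ⟨z, hz, hzD⟩ := hD_dense.inter_open_nonempty _ isOpen_Ioo ((not_covBy_iff hxy).1 hcov)
    exact ⟨z, Set.Ioo_subset_Ico_self hz, Or.inl hzD⟩

theorem exists_countable_iSup_eq_iSup [LinearOrder ι] [TopologicalSpace ι] [OrderTopology ι]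
    [SecondCountableTopology ι] {b : ι} (hb : IsTop b) :
    ∃ D : Set ι, D.Countable ∧ ∀ g : ι → ℝ≥0∞,
      (∀ t < b, ContinuousWithinAt g (Set.Ici t) t) → ⨆ t, g t = ⨆ t : D, g t := by
  obtain ⟨D, hD, hD_Ico⟩ := exists_countable_forall_lt_Ico_inter_nonempty ι
  refine ⟨insert b D, hD.insert b, fun g hg => le_antisymm (iSup_le fun t => ?_)
    (iSup_le fun t => le_iSup g t)⟩
  rcases (hb t).eq_or_lt with rfl | htb
  · exact le_iSup (fun t : ↥(insert t D) => g t) ⟨t, Set.mem_insert t D⟩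
  refine le_of_forall_lt fun c hc => ?_
  obtain ⟨u, htu, hu⟩ := (mem_nhdsGE_iff_exists_Ico_subset' htb).1
    ((hg t htb).eventually_const_lt hc)
  obtain ⟨v, hv, hvD⟩ := hD_Ico t u htu
  exact (hu hv).trans_le (le_iSup (fun t : ↥(insert b D) => g t) ⟨v, Set.mem_insert_of_mem b hvD⟩)

section RightContinuous

variable [LinearOrder ι] [TopologicalSpace ι] [OrderTopology ι] [SecondCountableTopology ι]
  {ℱ : Filtration ι m0} {b : ι}

theorem measurable_iSup_enorm_of_rightContinuous {f : ι → Ω → ℝ} (hb : IsTop b)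
    (hf : ∀ t, Measurable (f t))
    (hf_rc : ∀ ω, ∀ t < b, ContinuousWithinAt (fun s => f s ω) (Set.Ici t) t) :
    Measurable fun ω => ⨆ t, ‖f t ω‖ₑ := by
  obtain ⟨D, hD, hD_iSup⟩ := exists_countable_iSup_eq_iSup hb
  have := hD.to_subtype
  simp only [hD_iSup _ fun t ht => (hf_rc _ t ht).enorm]
  fun_prop

theorem lintegral_iSup_rpow_le_of_submartingale [IsFiniteMeasure P] {f : ι → Ω → ℝ}
    (hf : Submartingale f ℱ P) (hf0 : 0 ≤ f) (hb : IsTop b)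
    (hf_rc : ∀ ω, ∀ t < b, ContinuousWithinAt (fun s => f s ω) (Set.Ici t) t)
    (hrs : r.HolderConjugate s) :
    ∫⁻ ω, (⨆ t, ‖f t ω‖ₑ) ^ r ∂P ≤ ENNReal.ofReal s ^ r * ∫⁻ ω, ‖f b ω‖ₑ ^ r ∂P := by
  obtain ⟨D, hD, hD_iSup⟩ := exists_countable_iSup_eq_iSup hb
  have := hD.to_subtype
  simp only [hD_iSup _ fun t ht => (hf_rc _ t ht).enorm]
  refine lintegral_iSup_rpow_le_of_finset_sup
    (fun t : D => ((hf.stronglyMeasurable t).mono (ℱ.le t)).enorm) hrs.pos fun u => ?_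
  simpa only [Finset.sup_map, Function.comp_def, Function.Embedding.subtype_apply] using
    lintegral_finset_sup_rpow_le_of_submartingale hf hf0 hrs hb
      (u.map (Function.Embedding.subtype (· ∈ D)))

end RightContinuous

theorem lintegral_enorm_condExp_rpow_le {m : MeasurableSpace Ω} (ξ : Ω → ℝ) (hr : 1 ≤ r) :
    ∫⁻ ω, ‖P[ξ | m] ω‖ₑ ^ r ∂P ≤ ∫⁻ ω, ‖ξ ω‖ₑ ^ r ∂P := by
  have hr0 : 0 < r := one_pos.trans_le hr
  have h := eLpNorm_condExp_le_eLpNorm (m := m) (μ := P) ξ (ENNReal.one_le_ofReal.2 hr)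
  rwa [eLpNorm_eq_lintegral_rpow_enorm_toReal (by simpa using hr0) ENNReal.ofReal_ne_top,
    eLpNorm_eq_lintegral_rpow_enorm_toReal (by simpa using hr0) ENNReal.ofReal_ne_top,
    ENNReal.toReal_ofReal hr0.le, ENNReal.rpow_le_rpow_iff (one_div_pos.2 hr0)] at h

theorem martingale_of_ae_eq_condExp [Preorder ι] {ℱ : Filtration ι m0} [SigmaFiniteFiltration P ℱ]
    {M : ι → Ω → ℝ} {ξ : Ω → ℝ} (hM : Adapted ℱ M) (hMξ : ∀ t, M t =ᵐ[P] P[ξ | ℱ t]) :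
    Martingale M ℱ P :=
  ⟨fun t => (hM t).stronglyMeasurable, fun i j hij => (condExp_congr_ae (hMξ j)).trans
    (((martingale_condExp ξ ℱ P).2 i j hij).trans (hMξ i).symm)⟩

theorem lintegral_mul_le_of_lintegral_rpow_le (hrs : r.HolderConjugate s) {F G : Ω → ℝ≥0∞}
    (hF : AEMeasurable F P) (hG : AEMeasurable G P) {C I : ℝ≥0∞}
    (hFI : ∫⁻ ω, F ω ^ r ∂P ≤ C * I) (hGI : ∫⁻ ω, G ω ^ s ∂P ≤ I) :
    ∫⁻ ω, F ω * G ω ∂P ≤ C ^ (1 / r) * I := by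
  have hr := hrs.one_div_nonneg
  have hs := hrs.symm.one_div_nonneg
  calc ∫⁻ ω, F ω * G ω ∂P
      ≤ (∫⁻ ω, F ω ^ r ∂P) ^ (1 / r) * (∫⁻ ω, G ω ^ s ∂P) ^ (1 / s) :=
        ENNReal.lintegral_mul_le_Lp_mul_Lq P hrs hF hG
    _ ≤ (C * I) ^ (1 / r) * I ^ (1 / s) := by gcongr
    _ = C ^ (1 / r) * I := by
        rw [ENNReal.mul_rpow_of_nonneg _ _ hr, mul_assoc, ← ENNReal.rpow_add_of_nonneg _ _ hr hs,
          hrs.one_div_add_one_div, div_one, ENNReal.rpow_one]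

theorem lintegral_rpow_mul_rpow_le_of_lintegral_rpow_le {ν q μ p : ℝ}
    (hνμ : ν.HolderConjugate μ) (hqp : q.HolderConjugate p) (hνq : ν < q) {Z A : Ω → ℝ≥0∞}
    (hZ : AEMeasurable Z P) (hA : AEMeasurable A P) {c : ℝ≥0∞}
    (hZA : ∫⁻ ω, Z ω ^ (q / (q - ν)) ∂P ≤ c ^ (q / (q - ν)) * ∫⁻ ω, A ω ^ (q / ν) ∂P) :
    ∫⁻ ω, Z ω ^ p * A ω ^ (p / μ) ∂P ≤ c ^ p * ∫⁻ ω, A ω ^ (q / ν) ∂P := by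
  have hν := hνμ.pos
  have hq := hqp.pos
  have hν1 := hνμ.sub_one_pos
  have hq1 := hqp.sub_one_pos
  have hqν : 0 < q - ν := sub_pos.2 hνq
  have hconj : ((q - 1) / (q - ν)).HolderConjugate ((q - 1) / (ν - 1)) := by
    rw [Real.holderConjugate_iff, one_lt_div hqν]
    exact ⟨by linarith, by field_simp; ring⟩
  have hp : p * ((q - 1) / (q - ν)) = q / (q - ν) := by
    rw [hqp.conjugate_eq]; field_simp
  have hpμ : p / μ * ((q - 1) / (ν - 1)) = q / ν := by
    rw [hqp.conjugate_eq, hνμ.conjugate_eq]; field_simp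
  have hp' : q / (q - ν) * (1 / ((q - 1) / (q - ν))) = p := by
    rw [hqp.conjugate_eq]; field_simp
  have holder := lintegral_mul_le_of_lintegral_rpow_le hconj (hZ.pow_const p)
    (hA.pow_const (p / μ)) (by simpa only [← ENNReal.rpow_mul, hp] using hZA)
    (by simp only [← ENNReal.rpow_mul, hpμ, le_refl])
  rwa [← ENNReal.rpow_mul, hp'] at holder

section MartingaleWeight

variable [LinearOrder ι] [TopologicalSpace ι] [OrderTopology ι] [SecondCountableTopology ι]
  {ℱ : Filtration ι m0} {b : ι} {M : ι → Ω → ℝ} {ξ : Ω → ℝ}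

theorem lintegral_iSup_rpow_le_of_ae_eq_condExp [IsFiniteMeasure P] (hM : Adapted ℱ M)
    (hM0 : 0 ≤ M) (hb : IsTop b)
    (hM_rc : ∀ ω, ∀ t < b, ContinuousWithinAt (fun s => M s ω) (Set.Ici t) t)
    (hMξ : ∀ t, M t =ᵐ[P] P[ξ | ℱ t]) (hrs : r.HolderConjugate s) :
    ∫⁻ ω, (⨆ t, ‖M t ω‖ₑ) ^ r ∂P ≤ ENNReal.ofReal s ^ r * ∫⁻ ω, ‖ξ ω‖ₑ ^ r ∂P :=
  calc ∫⁻ ω, (⨆ t, ‖M t ω‖ₑ) ^ r ∂P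
      ≤ ENNReal.ofReal s ^ r * ∫⁻ ω, ‖M b ω‖ₑ ^ r ∂P :=
        lintegral_iSup_rpow_le_of_submartingale
          (martingale_of_ae_eq_condExp hM hMξ).submartingale hM0 hb hM_rc hrs
    _ = ENNReal.ofReal s ^ r * ∫⁻ ω, ‖P[ξ | ℱ b] ω‖ₑ ^ r ∂P := by
        congr 1
        exact lintegral_congr_ae ((hMξ b).mono fun ω hω => by simp only [hω])
    _ ≤ ENNReal.ofReal s ^ r * ∫⁻ ω, ‖ξ ω‖ₑ ^ r ∂P := by
        gcongr ENNReal.ofReal s ^ r * ?_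
        exact lintegral_enorm_condExp_rpow_le ξ hrs.lt.le

theorem ae_iSup_enorm_le_of_ae_eq_condExp {c : ℝ≥0∞} (hb : IsTop b)
    (hM_rc : ∀ ω, ∀ t < b, ContinuousWithinAt (fun s => M s ω) (Set.Ici t) t)
    (hMξ : ∀ t, M t =ᵐ[P] P[ξ | ℱ t]) (hξ : ∀ᵐ ω ∂P, ‖ξ ω‖ₑ ≤ c) :
    ∀ᵐ ω ∂P, ⨆ t, ‖M t ω‖ₑ ≤ c := by
  obtain ⟨D, hD, hD_iSup⟩ := exists_countable_iSup_eq_iSup hb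
  have := hD.to_subtype
  simp only [hD_iSup _ fun t ht => (hM_rc _ t ht).enorm, iSup_le_iff, ae_all_iff]
  intro t
  have hcond : eLpNormEssSup (P[ξ | ℱ t]) P ≤ c := by
    simpa only [eLpNorm_exponent_top] using
      (eLpNorm_condExp_le_eLpNorm ξ le_top).trans (essSup_le_of_ae_le c hξ)
  filter_upwards [hMξ t, ae_le_eLpNormEssSup (f := P[ξ | ℱ t]) (μ := P)] with ω hω hle
  rw [hω]
  exact hle.trans hcond

theorem lintegral_iSup_rpow_mul_rpow_le [IsFiniteMeasure P] {ν q μ p : ℝ}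
    (hνμ : ν.HolderConjugate μ) (hqp : q.HolderConjugate p) (hνq : ν ≤ q) (hM : Adapted ℱ M)
    (hM0 : 0 ≤ M) (hb : IsTop b)
    (hM_rc : ∀ ω, ∀ t < b, ContinuousWithinAt (fun s => M s ω) (Set.Ici t) t)
    (hMξ : ∀ t, M t =ᵐ[P] P[ξ | ℱ t]) {A : Ω → ℝ≥0∞} (hA : Measurable A)
    (hξA : ∀ ω, ‖ξ ω‖ₑ ≤ A ω ^ ((q - ν) / ν)) :
    ∫⁻ ω, (⨆ t, ‖M t ω‖ₑ) ^ p * A ω ^ (p / μ) ∂P ≤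
      ENNReal.ofReal (q / ν) ^ p * ∫⁻ ω, A ω ^ (q / ν) ∂P := by
  have hν := hνμ.pos
  have hq := hqp.pos
  rcases hνq.eq_or_lt with rfl | hlt
  · obtain rfl : μ = p := hνμ.conjugate_eq.trans hqp.conjugate_eq.symm
    simp only [sub_self, zero_div, ENNReal.rpow_zero] at hξA
    rw [div_self hνμ.symm.ne_zero, div_self hν.ne', ENNReal.ofReal_one, ENNReal.one_rpow, one_mul]
    refine lintegral_mono_ae ?_
    filter_upwards [ae_iSup_enorm_le_of_ae_eq_condExp hb hM_rc hMξ (.of_forall hξA)] with ω hω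
    exact mul_le_of_le_one_left' (ENNReal.rpow_le_one hω hνμ.symm.nonneg)
  · have hqν : 0 < q - ν := sub_pos.2 hlt
    have doob_conj : (q / (q - ν)).HolderConjugate (q / ν) := by
      rw [Real.holderConjugate_iff, one_lt_div hqν]
      exact ⟨by linarith, by field_simp; ring⟩
    have hξ_int : ∫⁻ ω, ‖ξ ω‖ₑ ^ (q / (q - ν)) ∂P ≤ ∫⁻ ω, A ω ^ (q / ν) ∂P := by
      refine lintegral_mono fun ω => ?_
      calc ‖ξ ω‖ₑ ^ (q / (q - ν)) ≤ (A ω ^ ((q - ν) / ν)) ^ (q / (q - ν)) := by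
            gcongr; exact hξA ω
        _ = A ω ^ (q / ν) := by rw [← ENNReal.rpow_mul]; congr 1; field_simp
    have hsup := measurable_iSup_enorm_of_rightContinuous hb
      (fun t => (hM t).mono (ℱ.le t) le_rfl) hM_rc
    exact lintegral_rpow_mul_rpow_le_of_lintegral_rpow_le hνμ hqp hlt hsup.aemeasurable
      hA.aemeasurable ((lintegral_iSup_rpow_le_of_ae_eq_condExp hM hM0 hb hM_rc hMξ doob_conj).trans
        (mul_le_mul_right hξ_int _))

theorem lintegral_iSup_Icc_rpow_mul_rpow_le [IsFiniteMeasure P] {ν q μ p : ℝ}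
    (hνμ : ν.HolderConjugate μ) (hqp : q.HolderConjugate p) (hνq : ν ≤ q) {a : ι} (hab : a ≤ b)
    (hM : Adapted ℱ M) (hM0 : 0 ≤ M)
    (hM_rc : ∀ ω, ∀ t ∈ Set.Ico a b, ContinuousWithinAt (fun s => M s ω) (Set.Ici t) t)
    (hMξ : ∀ t ∈ Set.Icc a b, M t =ᵐ[P] P[ξ | ℱ t]) {A : Ω → ℝ≥0∞} (hA : Measurable A)
    (hξA : ∀ ω, ‖ξ ω‖ₑ ≤ A ω ^ ((q - ν) / ν)) :
    ∫⁻ ω, (⨆ t : Set.Icc a b, ‖M t ω‖ₑ) ^ p * A ω ^ (p / μ) ∂P ≤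
      ENNReal.ofReal (q / ν) ^ p * ∫⁻ ω, A ω ^ (q / ν) ∂P := by
  have hM_rc' : ∀ ω, ∀ t : Set.Icc a b, t < ⟨b, hab, le_rfl⟩ →
      ContinuousWithinAt (fun s : Set.Icc a b => M s ω) (Set.Ici t) t := fun ω t ht =>
    (hM_rc ω t ⟨t.2.1, ht⟩).comp continuous_subtype_val.continuousWithinAt fun _ h => h
  exact lintegral_iSup_rpow_mul_rpow_le (ℱ := reindexFiltration ℱ (Subtype.mono_coe _))
    (M := fun t : Set.Icc a b => M t) hνμ hqp hνq (fun t => hM t) (fun t => hM0 t)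
    (fun t => t.2.2) hM_rc' (fun t => hMξ t t.2) hA hξA

end MartingaleWeight

end MaximalInequality

theorem enorm_ite_zero_rpow_le (x : ℝ) {α : ℝ} (hα : 0 ≤ α) :
    ‖if x = 0 then 0 else x ^ α‖ₑ ≤ ‖x‖ₑ ^ α := by
  split_ifs with hx
  · simp only [enorm_zero, zero_le]
  · rw [Real.enorm_eq_ofReal_abs, Real.enorm_eq_ofReal_abs,
      ENNReal.ofReal_rpow_of_nonneg (abs_nonneg x) hα]
    exact ENNReal.ofReal_le_ofReal (Real.abs_rpow_le_abs_rpow x α)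

theorem enorm_norm_rpow {E : Type*} [SeminormedAddCommGroup E] (x : E) {α : ℝ} (hα : 0 ≤ α) :
    ‖‖x‖ ^ α‖ₑ = ‖x‖ₑ ^ α := by
  rw [Real.enorm_rpow_of_nonneg (norm_nonneg x) hα, enorm_norm]

theorem enorm_ite_integral_norm_rpow_le {α E : Type*} {mα : MeasurableSpace α} (κ : Measure α)
    [SeminormedAddCommGroup E] (f : α → E) {ν β : ℝ} (hν : 0 ≤ ν) (hβ : 0 ≤ β) :
    ‖if ∫ t, ‖f t‖ ^ ν ∂κ = 0 then 0 else (∫ t, ‖f t‖ ^ ν ∂κ) ^ β‖ₑ ≤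
      (∫⁻ t, ‖f t‖ₑ ^ ν ∂κ) ^ β := by
  simp only [← enorm_norm_rpow _ hν]
  exact (enorm_ite_zero_rpow_le _ hβ).trans
    (ENNReal.rpow_le_rpow (enorm_integral_le_lintegral_enorm _) hβ)

theorem lintegral_mul_rpow_rpow_le {α : Type*} {mα : MeasurableSpace α} {κ : Measure α}
    {ν μ p : ℝ} (hνμ : ν.HolderConjugate μ) (hp : 0 ≤ p) {f g : α → ℝ≥0∞} {Z : ℝ≥0∞}
    (hg : AEMeasurable g κ) (hf : ∀ᵐ t ∂κ, f t ≤ Z) :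
    (∫⁻ t, (f t * g t ^ (ν - 1)) ^ μ ∂κ) ^ (p / μ) ≤
      Z ^ p * (∫⁻ t, g t ^ ν ∂κ) ^ (p / μ) := by
  have hμ := hνμ.symm.pos
  calc (∫⁻ t, (f t * g t ^ (ν - 1)) ^ μ ∂κ) ^ (p / μ)
      ≤ (∫⁻ t, Z ^ μ * g t ^ ν ∂κ) ^ (p / μ) := by
        gcongr ?_ ^ (p / μ)
        refine lintegral_mono_ae (hf.mono fun t ht => ?_)
        rw [ENNReal.mul_rpow_of_nonneg _ _ hμ.le, ← ENNReal.rpow_mul, hνμ.sub_one_mul_conj]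
        gcongr
    _ = Z ^ p * (∫⁻ t, g t ^ ν ∂κ) ^ (p / μ) := by
        rw [lintegral_const_mul'' _ (hg.pow_const ν),
          ENNReal.mul_rpow_of_nonneg _ _ (by positivity), ← ENNReal.rpow_mul,
          mul_div_cancel₀ _ hμ.ne']

theorem eucNorm_eq_norm_toLp {k : ℕ} (v : Fin k → ℝ) : eucNorm v = ‖WithLp.toLp 2 v‖ := by
  simp only [eucNorm, EuclideanSpace.norm_eq, Real.norm_eq_abs, sq_abs]

theorem stmt_8_general {ι Ω E : Type*} [LinearOrder ι] [TopologicalSpace ι] [OrderTopology ι]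
    [SecondCountableTopology ι] [MeasurableSpace ι] [OpensMeasurableSpace ι]
    [SeminormedAddCommGroup E] [MeasurableSpace E] [OpensMeasurableSpace E]
    {m0 : MeasurableSpace Ω} (P : Measure Ω) [IsFiniteMeasure P] (κ : Measure ι) [SFinite κ]
    (ℱ : Filtration ι m0) {a b : ι} (hab : a ≤ b) {ν q μ p : ℝ} (hνμ : ν.HolderConjugate μ)
    (hqp : q.HolderConjugate p) (hνq : ν ≤ q) {φ : ι × Ω → E} (hφ : Measurable φ)
    (hφ_int : ∫⁻ ω, (∫⁻ t in Set.Icc a b, ‖φ (t, ω)‖ₑ ^ ν ∂κ) ^ (q / ν) ∂P < ⊤)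
    {M : ι → Ω → ℝ} (hM0 : 0 ≤ M) (hM : Adapted ℱ M)
    (hM_rc : ∀ ω, ∀ t ∈ Set.Ico a b, ContinuousWithinAt (fun s => M s ω) (Set.Ici t) t)
    (hM_cond : ∀ t ∈ Set.Icc a b, M t =ᵐ[P]
      P[fun ω => if (∫ s in Set.Icc a b, ‖φ (s, ω)‖ ^ ν ∂κ) = 0 then 0
          else (∫ s in Set.Icc a b, ‖φ (s, ω)‖ ^ ν ∂κ) ^ ((q - ν) / ν) | ℱ t]) :
    ∫⁻ ω, (∫⁻ t in Set.Icc a b, ‖M t ω * ‖φ (t, ω)‖ ^ (ν - 1)‖ₑ ^ μ ∂κ) ^ (p / μ) ∂P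
      ≤ ENNReal.ofReal (q / ν) ^ p *
          ∫⁻ ω, (∫⁻ t in Set.Icc a b, ‖φ (t, ω)‖ₑ ^ ν ∂κ) ^ (q / ν) ∂P
    ∧ ∫⁻ ω, (∫⁻ t in Set.Icc a b, ‖M t ω * ‖φ (t, ω)‖ ^ (ν - 1)‖ₑ ^ μ ∂κ) ^ (p / μ) ∂P < ⊤ := by
  let A : Ω → ℝ≥0∞ := fun ω => ∫⁻ t in Set.Icc a b, ‖φ (t, ω)‖ₑ ^ ν ∂κ
  have hA : Measurable A := (hφ.enorm.pow_const ν).lintegral_prod_left'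
  have time_integral_le : ∀ ω,
      (∫⁻ t in Set.Icc a b, ‖M t ω * ‖φ (t, ω)‖ ^ (ν - 1)‖ₑ ^ μ ∂κ) ^ (p / μ) ≤
        (⨆ t : Set.Icc a b, ‖M t ω‖ₑ) ^ p * A ω ^ (p / μ) := fun ω => by
    simp only [enorm_mul, enorm_norm_rpow _ hνμ.sub_one_pos.le]
    exact lintegral_mul_rpow_rpow_le hνμ hqp.symm.nonneg
      (hφ.comp measurable_prodMk_right).enorm.aemeasurable
      (ae_restrict_of_forall_mem measurableSet_Icc fun t ht =>
        le_iSup (fun t : Set.Icc a b => ‖M t ω‖ₑ) ⟨t, ht⟩)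
  have bound := (lintegral_mono time_integral_le).trans <|
    lintegral_iSup_Icc_rpow_mul_rpow_le hνμ hqp hνq hab hM hM0 hM_rc hM_cond hA fun ω =>
      enorm_ite_integral_norm_rpow_le (κ.restrict (Set.Icc a b)) (fun t => φ (t, ω)) hνμ.nonneg
        (div_nonneg (sub_nonneg.2 hνq) hνμ.nonneg)
  exact ⟨bound, bound.trans_lt
    (ENNReal.mul_lt_top (ENNReal.rpow_lt_top_of_nonneg hqp.symm.nonneg ofReal_ne_top) hφ_int)⟩

/-- Lemma 4.6 of the paper. Let `1 < ν ≤ q̄ < ∞`, `μ = ν/(ν−1)`,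
`p̄ = q̄/(q̄−1)`, let `φ` be jointly measurable with
`E[(∫₀^T |φ(t)|^ν dt)^{q̄/ν}] < ∞`, and let `M` be an adapted, jointly measurable,
right-continuous nonnegative process such that for each `t ∈ [0,T]`, `M(t)` is a version
of `E[(∫₀^T |φ(s)|^ν ds)^{(q̄−ν)/ν} 1_{∫₀^T |φ(s)|^ν ds ≠ 0} | F_t]`. Then
`E[(∫₀^T (M(t)|φ(t)|^{ν−1})^μ dt)^{p̄/μ}] ≤ (q̄/ν)^{q̄/(q̄−1)} E[(∫₀^T |φ(t)|^ν dt)^{q̄/ν}] < ∞`;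
in particular `t ↦ M(t)|φ(t)|^{ν−2}φ(t)` belongs to `L^{p̄}(Ω; L^{μ}(0,T;ℝ^m))`. -/
theorem stmt_8 {m : ℕ} {Ω : Type*} {m0 : MeasurableSpace Ω} (P : Measure Ω)
    [IsProbabilityMeasure P] (ℱ : Filtration ℝ m0)
    (T : ℝ) (hT : 0 < T) (ν qb μ pb : ℝ) (hν : 1 < ν) (hνq : ν ≤ qb)
    (hμ : μ = ν / (ν - 1)) (hpb : pb = qb / (qb - 1))
    (φ : ℝ × Ω → Fin m → ℝ) (hφmeas : Measurable φ)
    (hφint : ∫⁻ ω, (∫⁻ t in Set.Ioc 0 T,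
        ENNReal.ofReal (eucNorm (φ (t, ω))) ^ ν) ^ (qb / ν) ∂P < ⊤)
    (M : ℝ → Ω → ℝ) (hMnn : ∀ t ω, 0 ≤ M t ω)
    (hMadapted : Adapted ℱ M)
    (hMmeas : Measurable (fun q : ℝ × Ω => M q.1 q.2))
    (hMrc : ∀ ω t, ContinuousWithinAt (fun s => M s ω) (Set.Ici t) t)
    (hMcond : ∀ t ∈ Set.Icc (0 : ℝ) T, (fun ω => M t ω) =ᵐ[P]
      P[fun ω => if (∫ s in Set.Ioc 0 T, eucNorm (φ (s, ω)) ^ ν) = 0 then 0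
          else (∫ s in Set.Ioc 0 T, eucNorm (φ (s, ω)) ^ ν) ^ ((qb - ν) / ν) | ℱ t]) :
    ∫⁻ ω, (∫⁻ t in Set.Ioc 0 T,
        ENNReal.ofReal (M t ω * eucNorm (φ (t, ω)) ^ (ν - 1)) ^ μ) ^ (pb / μ) ∂P
      ≤ ENNReal.ofReal ((qb / ν) ^ (qb / (qb - 1))) *
          ∫⁻ ω, (∫⁻ t in Set.Ioc 0 T,
            ENNReal.ofReal (eucNorm (φ (t, ω))) ^ ν) ^ (qb / ν) ∂P
    ∧ ∫⁻ ω, (∫⁻ t in Set.Ioc 0 T,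
        ENNReal.ofReal (M t ω * eucNorm (φ (t, ω)) ^ (ν - 1)) ^ μ) ^ (pb / μ) ∂P < ⊤ := by
  have hνμ : ν.HolderConjugate μ := hμ ▸ .conjExponent hν
  have hqp : qb.HolderConjugate pb := hpb ▸ .conjExponent (hν.trans_le hνq)
  have hIcc := Measure.restrict_congr_set (Ioc_ae_eq_Icc (μ := volume) (a := 0) (b := T))
  have ofReal_eq_enorm : ∀ t ω, ENNReal.ofReal (M t ω * ‖WithLp.toLp 2 (φ (t, ω))‖ ^ (ν - 1)) =
      ‖M t ω * ‖WithLp.toLp 2 (φ (t, ω))‖ ^ (ν - 1)‖ₑ := fun t ω =>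
    (Real.enorm_of_nonneg (mul_nonneg (hMnn t ω) (by positivity))).symm
  simp only [eucNorm_eq_norm_toLp, hIcc, ofReal_norm, ofReal_eq_enorm] at hφint hMcond ⊢
  rw [← hpb, ← ENNReal.ofReal_rpow_of_nonneg (div_nonneg hqp.nonneg hνμ.nonneg) hqp.symm.nonneg]
  exact stmt_8_general P volume ℱ hT.le hνμ hqp hνq ((WithLp.measurable_toLp 2 _).comp hφmeas)
    hφint hMnn hMadapted (fun ω t _ => hMrc ω t) hMcond
end

section
/- Let T > 0, let (Ω, P) be a probability space, let q̄, ν ∈ (1, ∞), and let φ, ψ : [0,T] × Ω → ℝ^m be jointly measurable with ‖φ‖ := (E[(∫₀^T |φ(t)|^ν dt)^{q̄/ν}])^{1/q̄} < ∞, ‖ψ‖ < ∞ (same norm), and ‖φ‖ ≠ 0. Then the real function δ ↦ ½ (E[(∫₀^T |φ(t)+δψ(t)|^ν dt)^{q̄/ν}])^{2/q̄} is differentiable at δ = 0, and its derivative equals ‖φ‖^{2−q̄} · E[ (∫₀^T |φ(s)|^ν ds)^{(q̄−ν)/ν} · 1_{{∫₀^T |φ(s)|^ν ds ≠ 0}}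 · ∫₀^T |φ(t)|^{ν−2} ⟨φ(t), ψ(t)⟩ dt ]. Moreover, if ‖φ‖ = 0, the derivative at δ = 0 equals 0. -/
open MeasureTheory ENNReal

/-- Euclidean inner product on `Fin k → ℝ`. -/
def eucInner {k : ℕ} (v w : Fin k → ℝ) : ℝ := ∑ i, v i * w i

/-! Along a line `δ ↦ x + δ • y` every power `‖·‖ ^ r`, `1 ≤ r`, of a norm is convex, so its
difference quotients at `0` are bounded by those at `±1`. Dominated convergence then shows that an
integral of such functions is differentiable as soon as the integrands are. This is used once for
the integral over time, giving the derivative of the `L^ν` norm, and once more for the expectation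
of a power of that norm. -/

open Set Filter Topology

section ConvexIntegral

lemma abs_slope_le_max_of_convexOn {s : Set ℝ} {f : ℝ → ℝ} {x₀ a b x : ℝ} (hf : ConvexOn ℝ s f)
    (hx₀ : x₀ ∈ s) (ha : a ∈ s \ {x₀}) (hb : b ∈ s \ {x₀}) (hx : x ∈ Icc a b \ {x₀}) :
    |slope f x₀ x| ≤ max |slope f x₀ a| |slope f x₀ b| := by
  have hxs : x ∈ s \ {x₀} := ⟨hf.1.ordConnected.out ha.1 hb.1 hx.1, hx.2⟩
  exact abs_le_max_abs_abs (hf.slope_mono hx₀ ha hxs hx.1.1) (hf.slope_mono hx₀ hxs hb hx.1.2)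

variable {α : Type*} [MeasurableSpace α] {μ : Measure α}

lemma slope_integral {F : ℝ → α → ℝ} {x₀ x : ℝ} (hx₀ : Integrable (F x₀) μ)
    (hx : Integrable (F x) μ) :
    slope (fun y ↦ ∫ a, F y a ∂μ) x₀ x = ∫ a, slope (F · a) x₀ x ∂μ := by
  simp only [slope_def_module, integral_smul, integral_sub hx hx₀]

theorem hasDerivAt_integral_of_convexOn {F : ℝ → α → ℝ} {F' : α → ℝ} {s : Set ℝ} {x₀ : ℝ}
    (hs : s ∈ 𝓝 x₀) (hF_int : ∀ x ∈ s, Integrable (F x) μ)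
    (hF_conv : ∀ᵐ a ∂μ, ConvexOn ℝ s (F · a))
    (hF_deriv : ∀ᵐ a ∂μ, HasDerivAt (F · a) (F' a) x₀) :
    HasDerivAt (fun x ↦ ∫ a, F x a ∂μ) (∫ a, F' a ∂μ) x₀ := by
  have hx₀ : x₀ ∈ s := mem_of_mem_nhds hs
  obtain ⟨ε, hε, hεs⟩ := Metric.nhds_basis_closedBall.mem_iff.1 hs
  rw [Real.closedBall_eq_Icc] at hεs
  have hl : x₀ - ε ∈ s \ {x₀} := ⟨hεs ⟨by linarith, by linarith⟩, by simp [hε.ne']⟩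
  have hr : x₀ + ε ∈ s \ {x₀} := ⟨hεs ⟨by linarith, by linarith⟩, by simp [hε.ne']⟩
  have hslope_int : ∀ x ∈ s, Integrable (fun a ↦ slope (F · a) x₀ x) μ := fun x hx ↦
    ((hF_int x hx).sub (hF_int x₀ hx₀)).smul (x - x₀)⁻¹
  have hnear : ∀ᶠ x in 𝓝[≠] x₀, x ∈ Icc (x₀ - ε) (x₀ + ε) \ {x₀} :=
    inter_mem (nhdsWithin_le_nhds (Icc_mem_nhds (by linarith) (by linarith))) self_mem_nhdsWithin
  have hbound : ∀ᶠ x in 𝓝[≠] x₀, ∀ᵐ a ∂μ, ‖slope (F · a) x₀ x‖ ≤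
      max |slope (F · a) x₀ (x₀ - ε)| |slope (F · a) x₀ (x₀ + ε)| := by
    filter_upwards [hnear] with x hx
    filter_upwards [hF_conv] with a ha
    exact abs_slope_le_max_of_convexOn ha hx₀ hl hr hx
  rw [hasDerivAt_iff_tendsto_slope]
  refine (tendsto_integral_filter_of_dominated_convergence _ ?_ hbound
    ((hslope_int _ hl.1).abs.sup (hslope_int _ hr.1).abs)
    (hF_deriv.mono fun a ha ↦ hasDerivAt_iff_tendsto_slope.1 ha)).congr' ?_
  · exact hnear.mono fun x hx ↦ (hslope_int x (hεs hx.1)).aestronglyMeasurable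
  · exact hnear.mono fun x hx ↦ (slope_integral (hF_int x₀ hx₀) (hF_int x (hεs hx.1))).symm

end ConvexIntegral

section Norm

lemma convexOn_norm_add_smul_rpow {E : Type*} [SeminormedAddCommGroup E] [NormedSpace ℝ E]
    (x y : E) {r : ℝ} (hr : 1 ≤ r) : ConvexOn ℝ univ fun δ : ℝ ↦ ‖x + δ • y‖ ^ r := by
  have hline : ConvexOn ℝ univ fun δ : ℝ ↦ ‖x + δ • y‖ := by
    simpa [Function.comp_def, AffineMap.lineMap_apply, add_comm]
      using (convexOn_univ_norm (E := E)).comp_affineMap (AffineMap.lineMap x (x + y))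
  have himage : Convex ℝ ((fun δ : ℝ ↦ ‖x + δ • y‖) '' univ) :=
    (isPreconnected_univ.image _ (by fun_prop)).ordConnected.convex
  have hnonneg : (fun δ : ℝ ↦ ‖x + δ • y‖) '' univ ⊆ Ici 0 := by
    rintro _ ⟨δ, -, rfl⟩
    exact norm_nonneg _
  exact ((convexOn_rpow hr).subset hnonneg himage).comp hline fun a ha b _ hab ↦
    Real.rpow_le_rpow (hnonneg ha) hab (by positivity)

lemma hasDerivAt_norm_add_smul_rpow {E : Type*} [NormedAddCommGroup E] [InnerProductSpace ℝ E]
    (x y : E) {p : ℝ} (hp : 1 < p) :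
    HasDerivAt (fun δ : ℝ ↦ ‖x + δ • y‖ ^ p) (p * (‖x‖ ^ (p - 2) * inner ℝ x y)) 0 := by
  have hline : HasDerivAt (fun δ : ℝ ↦ x + δ • y) y 0 := by
    simpa using ((hasDerivAt_id (0 : ℝ)).smul_const y).const_add x
  simpa [Function.comp_def, mul_assoc]
    using (hasFDerivAt_norm_rpow (x + (0 : ℝ) • y) hp).comp_hasDerivAt (0 : ℝ) hline

end Norm

section LpNorm

variable {α E : Type*} [MeasurableSpace α] {μ : Measure α} [NormedAddCommGroup E]

lemma lpNorm_rpow_eq_integral {f : α → E} {p : ℝ} (hp : 0 < p) (hf : AEStronglyMeasurable f μ) :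
    lpNorm f (.ofReal p) μ ^ p = ∫ a, ‖f a‖ ^ p ∂μ := by
  rw [lpNorm_eq_integral_norm_rpow_toReal (by simpa using hp) ofReal_ne_top hf,
    toReal_ofReal hp.le, Real.rpow_inv_rpow (integral_nonneg fun _ ↦ by positivity) hp.ne']

lemma integrable_norm_rpow_of_memLp {f : α → E} {p : ℝ} (hp : 0 < p)
    (hf : MemLp f (.ofReal p) μ) : Integrable (fun a ↦ ‖f a‖ ^ p) μ := by
  simpa only [toReal_ofReal hp.le]
    using hf.integrable_norm_rpow (by simpa using hp) ofReal_ne_top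

lemma lpNorm_add_smul_eq_norm_toLp [NormedSpace ℝ E] {p : ℝ≥0∞} {f g : α → E} (hf : MemLp f p μ)
    (hg : MemLp g p μ) (δ : ℝ) : lpNorm (f + δ • g) p μ = ‖hf.toLp f + δ • hg.toLp g‖ := by
  rw [← MemLp.toLp_const_smul, ← MemLp.toLp_add, Lp.norm_toLp,
    toReal_eLpNorm (hf.add (hg.const_smul δ)).aestronglyMeasurable]

lemma convexOn_lpNorm_add_smul_rpow [NormedSpace ℝ E] {p : ℝ≥0∞} [Fact (1 ≤ p)] {f g : α → E}
    (hf : MemLp f p μ) (hg : MemLp g p μ) {r : ℝ} (hr : 1 ≤ r) :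
    ConvexOn ℝ univ fun δ : ℝ ↦ lpNorm (f + δ • g) p μ ^ r := by
  simpa only [lpNorm_add_smul_eq_norm_toLp hf hg] using convexOn_norm_add_smul_rpow _ _ hr

variable [InnerProductSpace ℝ E]

/-- The derivative at `δ = 0` of `‖f + δ g‖ ^ q / q` for the `L^p` norm, `1 < p, q`: the pairing of
`g` with the image of `f` under the duality map of `L^p` of gauge `r ↦ r ^ (q - 1)`. -/
noncomputable def lpPairing (p q : ℝ) (μ : Measure α) (f g : α → E) : ℝ :=
  if ∫ a, ‖f a‖ ^ p ∂μ = 0 then 0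
  else (∫ a, ‖f a‖ ^ p ∂μ) ^ ((q - p) / p) * ∫ a, ‖f a‖ ^ (p - 2) * inner ℝ (f a) (g a) ∂μ

variable {p q : ℝ} {f g : α → E}

lemma hasDerivAt_integral_norm_add_smul_rpow (hp : 1 < p) (hf : MemLp f (.ofReal p) μ)
    (hg : MemLp g (.ofReal p) μ) :
    HasDerivAt (fun δ : ℝ ↦ ∫ a, ‖f a + δ • g a‖ ^ p ∂μ)
      (p * ∫ a, ‖f a‖ ^ (p - 2) * inner ℝ (f a) (g a) ∂μ) 0 := by
  rw [← integral_const_mul]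
  exact hasDerivAt_integral_of_convexOn univ_mem
    (fun δ _ ↦ integrable_norm_rpow_of_memLp (by positivity) (hf.add (hg.const_smul δ)))
    (.of_forall fun a ↦ convexOn_norm_add_smul_rpow (f a) (g a) hp.le)
    (.of_forall fun a ↦ hasDerivAt_norm_add_smul_rpow (f a) (g a) hp)

lemma hasDerivAt_lpNorm_add_smul_rpow (hp : 1 < p) (hq : 1 < q) (hf : MemLp f (.ofReal p) μ)
    (hg : MemLp g (.ofReal p) μ) :
    HasDerivAt (fun δ : ℝ ↦ lpNorm (f + δ • g) (.ofReal p) μ ^ q) (q * lpPairing p q μ f g) 0 := by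
  have hp₀ : 0 < p := by positivity
  have hpow (δ : ℝ) : lpNorm (f + δ • g) (.ofReal p) μ ^ p = ∫ a, ‖f a + δ • g a‖ ^ p ∂μ :=
    lpNorm_rpow_eq_integral hp₀ (hf.add (hg.const_smul δ)).aestronglyMeasurable
  unfold lpPairing
  split_ifs with hzero
  · have hf₀ : f =ᵐ[μ] 0 := by
      rwa [← lpNorm_rpow_eq_integral hp₀ hf.1, Real.rpow_eq_zero lpNorm_nonneg hp₀.ne',
        lpNorm_eq_zero hf (by simpa using hp₀)] at hzero
    have hline (δ : ℝ) : lpNorm (f + δ • g) (.ofReal p) μ = |δ| * lpNorm g (.ofReal p) μ := by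
      rw [← toReal_eLpNorm (hf.add (hg.const_smul δ)).1, ← toReal_eLpNorm hg.1,
        eLpNorm_congr_ae (hf₀.add .rfl), zero_add, eLpNorm_const_smul, toReal_mul, toReal_enorm,
        Real.norm_eq_abs]
    simp only [hline, Real.mul_rpow (abs_nonneg _) lpNorm_nonneg]
    simpa using (hasDerivAt_abs_rpow 0 hq).mul_const (lpNorm g (.ofReal p) μ ^ q)
  · have hderiv := (hasDerivAt_integral_norm_add_smul_rpow hp hf hg).rpow_const (p := q / p)
      (.inl (by simpa using hzero))
    simp only [← hpow, ← Real.rpow_mul lpNorm_nonneg, mul_div_cancel₀ q hp₀.ne'] at hderiv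
    refine hderiv.congr_deriv ?_
    rw [Real.rpow_mul lpNorm_nonneg, hpow, sub_div, div_self hp₀.ne']
    simp only [zero_smul, add_zero]
    field_simp

end LpNorm

section MixedNorm

variable {S Ω E : Type*} [MeasurableSpace S] [MeasurableSpace Ω] {μ : Measure S} {P : Measure Ω}
  [NormedAddCommGroup E]

/-- The extended norm of `L^q(Ω, P; L^p(S, μ; E))`, for functions of the pair `(t, ω)`. -/
noncomputable def mixedENorm (p q : ℝ≥0∞) (μ : Measure S) (P : Measure Ω) (φ : S × Ω → E) :
    ℝ≥0∞ :=
  eLpNorm (fun ω ↦ eLpNorm (fun t ↦ φ (t, ω)) p μ) q P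

lemma mixedENorm_ofReal_rpow {p q : ℝ} (hp : 0 < p) (hq : 0 < q) (φ : S × Ω → E) :
    mixedENorm (.ofReal p) (.ofReal q) μ P φ ^ q =
      ∫⁻ ω, (∫⁻ t, ‖φ (t, ω)‖ₑ ^ p ∂μ) ^ (q / p) ∂P := by
  simp only [mixedENorm, eLpNorm_eq_lintegral_rpow_enorm_toReal (ofReal_pos.2 hp).ne' ofReal_ne_top,
    eLpNorm_eq_lintegral_rpow_enorm_toReal (ofReal_pos.2 hq).ne' ofReal_ne_top,
    toReal_ofReal hp.le, toReal_ofReal hq.le, enorm_eq_self, ← ENNReal.rpow_mul,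
    one_div_mul_cancel hq.ne', ENNReal.rpow_one, one_div_mul_eq_div]

lemma mixedENorm_const_smul_le [NormedSpace ℝ E] (p q : ℝ≥0∞) (c : ℝ) (φ : S × Ω → E) :
    mixedENorm p q μ P (c • φ) ≤ ‖c‖ₑ * mixedENorm p q μ P φ :=
  eLpNorm_le_nnreal_smul_eLpNorm_of_ae_le_mul'
    (.of_forall fun ω ↦ (eLpNorm_const_smul c (fun t ↦ φ (t, ω)) p μ).le) q

variable [SFinite μ] {p q : ℝ≥0∞} {φ ψ : S × Ω → E}

lemma measurable_eLpNorm_slice (hp : p ≠ ∞) (hφ : StronglyMeasurable φ) :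
    Measurable fun ω ↦ eLpNorm (fun t ↦ φ (t, ω)) p μ := by
  obtain rfl | hp₀ := eq_or_ne p 0
  · simp
  simp only [eLpNorm_eq_lintegral_rpow_enorm_toReal hp₀ hp]
  exact (hφ.enorm.pow_const p.toReal).lintegral_prod_left'.pow_const _

lemma mixedENorm_add_le (hp : p ≠ ∞) (hp₁ : 1 ≤ p) (hq₁ : 1 ≤ q) (hφ : StronglyMeasurable φ)
    (hψ : StronglyMeasurable ψ) :
    mixedENorm p q μ P (φ + ψ) ≤ mixedENorm p q μ P φ + mixedENorm p q μ P ψ :=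
  calc mixedENorm p q μ P (φ + ψ)
    _ ≤ eLpNorm ((fun ω ↦ eLpNorm (fun t ↦ φ (t, ω)) p μ) +
          fun ω ↦ eLpNorm (fun t ↦ ψ (t, ω)) p μ) q P :=
      eLpNorm_mono_enorm fun _ ↦ eLpNorm_add_le
        (hφ.comp_measurable measurable_prodMk_right).aestronglyMeasurable
        (hψ.comp_measurable measurable_prodMk_right).aestronglyMeasurable hp₁
    _ ≤ mixedENorm p q μ P φ + mixedENorm p q μ P ψ :=
      eLpNorm_add_le (measurable_eLpNorm_slice hp hφ).aestronglyMeasurable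
        (measurable_eLpNorm_slice hp hψ).aestronglyMeasurable hq₁

lemma ae_memLp_slice (hp : p ≠ ∞) (hq₀ : q ≠ 0) (hq : q ≠ ∞) (hφ : StronglyMeasurable φ)
    (hfin : mixedENorm p q μ P φ ≠ ∞) : ∀ᵐ ω ∂P, MemLp (fun t ↦ φ (t, ω)) p μ := by
  have hint : ∫⁻ ω, eLpNorm (fun t ↦ φ (t, ω)) p μ ^ q.toReal ∂P ≠ ∞ :=
    (lintegral_rpow_enorm_lt_top_of_eLpNorm_lt_top hq₀ hq hfin.lt_top).ne
  filter_upwards [ae_lt_top ((measurable_eLpNorm_slice hp hφ).pow_const _) hint] with ω hω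
  exact ⟨(hφ.comp_measurable measurable_prodMk_right).aestronglyMeasurable,
    (ENNReal.rpow_lt_top_iff_of_pos (toReal_pos hq₀ hq)).1 hω⟩

lemma eLpNorm_lpNorm_slice (hp : p ≠ ∞) (hq₀ : q ≠ 0) (hq : q ≠ ∞) (hφ : StronglyMeasurable φ)
    (hfin : mixedENorm p q μ P φ ≠ ∞) :
    eLpNorm (fun ω ↦ lpNorm (fun t ↦ φ (t, ω)) p μ) q P = mixedENorm p q μ P φ := by
  refine eLpNorm_congr_enorm_ae ?_
  filter_upwards [ae_memLp_slice hp hq₀ hq hφ hfin] with ω hω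
  rw [enorm_eq_self, ← ofReal_lpNorm hω, Real.enorm_of_nonneg lpNorm_nonneg]

lemma memLp_lpNorm_slice (hp : p ≠ ∞) (hq₀ : q ≠ 0) (hq : q ≠ ∞) (hφ : StronglyMeasurable φ)
    (hfin : mixedENorm p q μ P φ ≠ ∞) :
    MemLp (fun ω ↦ lpNorm (fun t ↦ φ (t, ω)) p μ) q P := by
  have hmeas : AEStronglyMeasurable (fun ω ↦ lpNorm (fun t ↦ φ (t, ω)) p μ) P :=
    (measurable_eLpNorm_slice hp hφ).ennreal_toReal.aestronglyMeasurable.congr <| .of_forall fun _ ↦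
      toReal_eLpNorm (hφ.comp_measurable measurable_prodMk_right).aestronglyMeasurable
  exact ⟨hmeas, (eLpNorm_lpNorm_slice hp hq₀ hq hφ hfin).trans_lt hfin.lt_top⟩

lemma toReal_mixedENorm_rpow_eq_integral {q : ℝ} (hp : p ≠ ∞) (hq : 0 < q)
    (hφ : StronglyMeasurable φ) (hfin : mixedENorm p (.ofReal q) μ P φ ≠ ∞) :
    (mixedENorm p (.ofReal q) μ P φ).toReal ^ q =
      ∫ ω, lpNorm (fun t ↦ φ (t, ω)) p μ ^ q ∂P := by
  have hmem := memLp_lpNorm_slice hp (ofReal_pos.2 hq).ne' ofReal_ne_top hφ hfin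
  rw [← eLpNorm_lpNorm_slice hp (ofReal_pos.2 hq).ne' ofReal_ne_top hφ hfin,
    toReal_eLpNorm hmem.1, lpNorm_rpow_eq_integral hq hmem.1]
  simp only [Real.norm_of_nonneg lpNorm_nonneg]

lemma mixedENorm_add_smul_ne_top [NormedSpace ℝ E] (hp : p ≠ ∞) (hp₁ : 1 ≤ p) (hq₁ : 1 ≤ q)
    (hφ : StronglyMeasurable φ) (hψ : StronglyMeasurable ψ) (hφfin : mixedENorm p q μ P φ ≠ ∞)
    (hψfin : mixedENorm p q μ P ψ ≠ ∞) (δ : ℝ) : mixedENorm p q μ P (φ + δ • ψ) ≠ ∞ := by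
  refine ne_top_of_le_ne_top ?_ ((mixedENorm_add_le hp hp₁ hq₁ hφ (hψ.const_smul δ)).trans
    (add_le_add_right (mixedENorm_const_smul_le p q δ ψ) _))
  finiteness

end MixedNorm

section Derivative

variable {S Ω E : Type*} [MeasurableSpace S] [MeasurableSpace Ω] {μ : Measure S} {P : Measure Ω}
  [SFinite μ] [NormedAddCommGroup E] {φ ψ : S × Ω → E}

lemma hasDerivAt_sq_mixedENorm_of_eq_zero [NormedSpace ℝ E] {p q : ℝ≥0∞} (hp : p ≠ ∞)
    (hp₁ : 1 ≤ p) (hq₁ : 1 ≤ q) (hφ : StronglyMeasurable φ) (hψ : StronglyMeasurable ψ)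
    (hφ₀ : mixedENorm p q μ P φ = 0) (hψfin : mixedENorm p q μ P ψ ≠ ∞) :
    HasDerivAt (fun δ : ℝ ↦ (mixedENorm p q μ P (φ + δ • ψ)).toReal ^ 2) 0 0 := by
  have hle (δ : ℝ) : (mixedENorm p q μ P (φ + δ • ψ)).toReal ≤
      |δ| * (mixedENorm p q μ P ψ).toReal := by
    have hadd := mixedENorm_add_le (q := q) (μ := μ) (P := P) hp hp₁ hq₁ hφ (hψ.const_smul δ)
    rw [hφ₀, zero_add] at hadd
    simpa using toReal_mono (by finiteness) (hadd.trans (mixedENorm_const_smul_le p q δ ψ))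
  rw [hasDerivAt_iff_hasFDerivAt, ContinuousLinearMap.toSpanSingleton_zero]
  refine Asymptotics.IsBigO.hasFDerivAt (n := 2) (.of_bound
    ((mixedENorm p q μ P ψ).toReal ^ 2) (.of_forall fun δ ↦ ?_)) one_lt_two
  simpa [mul_pow, mul_comm] using pow_le_pow_left₀ toReal_nonneg (hle δ) 2

variable [InnerProductSpace ℝ E] {p q : ℝ}

theorem hasDerivAt_mixedENorm_rpow (hp : 1 < p) (hq : 1 < q) (hφ : StronglyMeasurable φ)
    (hψ : StronglyMeasurable ψ) (hφfin : mixedENorm (.ofReal p) (.ofReal q) μ P φ ≠ ∞)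
    (hψfin : mixedENorm (.ofReal p) (.ofReal q) μ P ψ ≠ ∞) :
    HasDerivAt (fun δ : ℝ ↦ (mixedENorm (.ofReal p) (.ofReal q) μ P (φ + δ • ψ)).toReal ^ q)
      (q * ∫ ω, lpPairing p q μ (fun t ↦ φ (t, ω)) (fun t ↦ ψ (t, ω)) ∂P) 0 := by
  have hq₀ : 0 < q := by positivity
  have hp₁ : 1 ≤ ENNReal.ofReal p := by simpa using hp.le
  have hq₁ : 1 ≤ ENNReal.ofReal q := by simpa using hq.le
  have : Fact (1 ≤ ENNReal.ofReal p) := ⟨hp₁⟩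
  have hmeas (δ : ℝ) : StronglyMeasurable (φ + δ • ψ) := hφ.add (hψ.const_smul δ)
  have hfin := mixedENorm_add_smul_ne_top ofReal_ne_top hp₁ hq₁ hφ hψ hφfin hψfin
  have hslice : ∀ᵐ ω ∂P, MemLp (fun t ↦ φ (t, ω)) (.ofReal p) μ ∧
      MemLp (fun t ↦ ψ (t, ω)) (.ofReal p) μ :=
    (ae_memLp_slice ofReal_ne_top (by positivity) ofReal_ne_top hφ hφfin).and
      (ae_memLp_slice ofReal_ne_top (by positivity) ofReal_ne_top hψ hψfin)
  simp only [toReal_mixedENorm_rpow_eq_integral ofReal_ne_top hq₀ (hmeas _) (hfin _)]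
  rw [← integral_const_mul]
  refine hasDerivAt_integral_of_convexOn univ_mem (fun δ _ ↦ ?_) ?_ ?_
  · simpa only [Real.norm_of_nonneg lpNorm_nonneg] using integrable_norm_rpow_of_memLp hq₀
      (memLp_lpNorm_slice ofReal_ne_top (by positivity) ofReal_ne_top (hmeas δ) (hfin δ))
  · filter_upwards [hslice] with ω ⟨hφω, hψω⟩
    exact convexOn_lpNorm_add_smul_rpow hφω hψω hq.le
  · filter_upwards [hslice] with ω ⟨hφω, hψω⟩
    exact hasDerivAt_lpNorm_add_smul_rpow hp hq hφω hψω

theorem hasDerivAt_sq_mixedENorm (hp : 1 < p) (hq : 1 < q) (hφ : StronglyMeasurable φ)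
    (hψ : StronglyMeasurable ψ) (hφ₀ : mixedENorm (.ofReal p) (.ofReal q) μ P φ ≠ 0)
    (hφfin : mixedENorm (.ofReal p) (.ofReal q) μ P φ ≠ ∞)
    (hψfin : mixedENorm (.ofReal p) (.ofReal q) μ P ψ ≠ ∞) :
    HasDerivAt (fun δ : ℝ ↦ (mixedENorm (.ofReal p) (.ofReal q) μ P (φ + δ • ψ)).toReal ^ 2)
      (2 * ((mixedENorm (.ofReal p) (.ofReal q) μ P φ).toReal ^ (2 - q) *
        ∫ ω, lpPairing p q μ (fun t ↦ φ (t, ω)) (fun t ↦ ψ (t, ω)) ∂P)) 0 := by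
  have hq₀ : 0 < q := by positivity
  have hpos := toReal_pos hφ₀ hφfin
  have hderiv := (hasDerivAt_mixedENorm_rpow hp hq hφ hψ hφfin hψfin).rpow_const (p := 2 / q)
    (.inl (by simpa using (Real.rpow_pos_of_pos hpos q).ne'))
  simp only [← Real.rpow_mul toReal_nonneg, mul_div_cancel₀ (2 : ℝ) hq₀.ne', Real.rpow_two,
    zero_smul, add_zero, mul_sub, mul_one] at hderiv
  exact hderiv.congr_deriv (by field_simp)

theorem stmt_10_general (μ : Measure S) [SFinite μ] (P : Measure Ω) (ν q : ℝ) (hq : 1 < q)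
    (hν : 1 < ν) (φ ψ : S × Ω → E) (hφ : StronglyMeasurable φ) (hψ : StronglyMeasurable ψ)
    (N : ℝ → ℝ≥0∞)
    (hN : ∀ δ : ℝ, N δ = ∫⁻ ω, (∫⁻ t, ‖φ (t, ω) + δ • ψ (t, ω)‖ₑ ^ ν ∂μ) ^ (q / ν) ∂P)
    (hφfin : N 0 < ∞) (hψfin : ∫⁻ ω, (∫⁻ t, ‖ψ (t, ω)‖ₑ ^ ν ∂μ) ^ (q / ν) ∂P < ∞) :
    (N 0 ≠ 0 →
      HasDerivAt (fun δ : ℝ ↦ (1 / 2 : ℝ) * (N δ).toReal ^ (2 / q))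
        (((N 0).toReal ^ (1 / q)) ^ (2 - q) *
          ∫ ω, (if (∫ s, ‖φ (s, ω)‖ ^ ν ∂μ) = 0 then 0
            else (∫ s, ‖φ (s, ω)‖ ^ ν ∂μ) ^ ((q - ν) / ν) *
              ∫ t, ‖φ (t, ω)‖ ^ (ν - 2) * inner ℝ (φ (t, ω)) (ψ (t, ω)) ∂μ) ∂P) 0)
    ∧ (N 0 = 0 → HasDerivAt (fun δ : ℝ ↦ (1 / 2 : ℝ) * (N δ).toReal ^ (2 / q)) 0 0) := by
  have hν₀ : 0 < ν := by positivity
  have hq₀ : 0 < q := by positivity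
  set M := mixedENorm (E := E) (.ofReal ν) (.ofReal q) μ P
  have hNM (δ : ℝ) : N δ = M (φ + δ • ψ) ^ q :=
    (hN δ).trans (mixedENorm_ofReal_rpow hν₀ hq₀ (φ + δ • ψ)).symm
  have hNM₀ : N 0 = M φ ^ q := by simpa using hNM 0
  rw [← mixedENorm_ofReal_rpow hν₀ hq₀, rpow_lt_top_iff_of_pos hq₀] at hψfin
  rw [hNM₀, rpow_lt_top_iff_of_pos hq₀] at hφfin
  have hsq (δ : ℝ) : (N δ).toReal ^ (2 / q) = (M (φ + δ • ψ)).toReal ^ 2 := by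
    rw [hNM, ← toReal_rpow, ← Real.rpow_mul toReal_nonneg, mul_div_cancel₀ _ hq₀.ne', Real.rpow_two]
  simp only [hsq, hNM₀, ← toReal_rpow, one_div, Real.rpow_rpow_inv toReal_nonneg hq₀.ne', ne_eq,
    rpow_eq_zero_iff_of_pos hq₀]
  refine ⟨fun h₀ ↦ ?_, fun h₀ ↦ ?_⟩
  · exact ((hasDerivAt_sq_mixedENorm hν hq hφ hψ h₀ hφfin.ne hψfin.ne).const_mul 2⁻¹).congr_deriv
      (inv_mul_cancel_left₀ two_ne_zero _)
  · simpa using (hasDerivAt_sq_mixedENorm_of_eq_zero ofReal_ne_top (by simpa using hν.le)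
      (by simpa using hq.le) hφ hψ h₀ hψfin.ne).const_mul 2⁻¹

end Derivative

section Euclidean

variable {k : ℕ}

lemma eucNorm_eq_norm (v : Fin k → ℝ) : eucNorm v = ‖WithLp.toLp 2 v‖ := by
  simp [eucNorm, EuclideanSpace.norm_eq]

lemma eucInner_eq_inner (v w : Fin k → ℝ) :
    eucInner v w = inner ℝ (WithLp.toLp 2 v) (WithLp.toLp 2 w) := by
  simp [eucInner, PiLp.inner_apply, mul_comm]

lemma ofReal_eucNorm (v : Fin k → ℝ) : ENNReal.ofReal (eucNorm v) = ‖WithLp.toLp 2 v‖ₑ := by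
  rw [eucNorm_eq_norm, ofReal_norm]

end Euclidean

/-- Let `q̄, ν ∈ (1,∞)` and let `φ, ψ` be jointly measurable processes
with finite `L^{q̄}(Ω; L^{ν}(0,T;ℝ^m))` mixed norm; write
`N(δ) = E[(∫₀^T |φ(t)+δψ(t)|^ν dt)^{q̄/ν}]`, so that `‖φ+δψ‖ = N(δ)^{1/q̄}`. If `‖φ‖ ≠ 0`,
then `δ ↦ ½‖φ+δψ‖²` is differentiable at `δ = 0` with derivative
`‖φ‖^{2−q̄} E[(∫₀^T |φ(s)|^ν ds)^{(q̄−ν)/ν} 1_{∫₀^T |φ(s)|^ν ds ≠ 0}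
  ∫₀^T |φ(t)|^{ν−2} ⟨φ(t),ψ(t)⟩ dt]`;
moreover, if `‖φ‖ = 0`, the derivative at `δ = 0` equals `0`. -/
theorem stmt_10 {m : ℕ} {Ω : Type*} [MeasurableSpace Ω] (P : Measure Ω)
    [IsProbabilityMeasure P]
    (T ν qb : ℝ) (hT : 0 < T) (hq : 1 < qb) (hν : 1 < ν)
    (φ ψ : ℝ × Ω → Fin m → ℝ) (hφ : Measurable φ) (hψ : Measurable ψ)
    (N : ℝ → ℝ≥0∞)
    (hN : ∀ δ : ℝ, N δ = ∫⁻ ω, (∫⁻ t in Set.Ioc 0 T,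
        ENNReal.ofReal (eucNorm (φ (t, ω) + δ • ψ (t, ω))) ^ ν) ^ (qb / ν) ∂P)
    (hφfin : N 0 < ⊤)
    (hψfin : ∫⁻ ω, (∫⁻ t in Set.Ioc 0 T,
        ENNReal.ofReal (eucNorm (ψ (t, ω))) ^ ν) ^ (qb / ν) ∂P < ⊤) :
    (N 0 ≠ 0 →
      HasDerivAt (fun δ : ℝ => (1 / 2 : ℝ) * (N δ).toReal ^ (2 / qb))
        (((N 0).toReal ^ (1 / qb)) ^ (2 - qb) *
          ∫ ω, (if (∫ s in Set.Ioc 0 T, eucNorm (φ (s, ω)) ^ ν) = 0 then 0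
            else (∫ s in Set.Ioc 0 T, eucNorm (φ (s, ω)) ^ ν) ^ ((qb - ν) / ν) *
              ∫ t in Set.Ioc 0 T,
                eucNorm (φ (t, ω)) ^ (ν - 2) * eucInner (φ (t, ω)) (ψ (t, ω))) ∂P)
        0)
    ∧ (N 0 = 0 →
      HasDerivAt (fun δ : ℝ => (1 / 2 : ℝ) * (N δ).toReal ^ (2 / qb)) 0 0) := by
  simp only [ofReal_eucNorm, WithLp.toLp_add, WithLp.toLp_smul] at hN hψfin
  simpa only [eucNorm_eq_norm, eucInner_eq_inner] using stmt_10_general _ P ν qb hq hν _ _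
    (by fun_prop : Measurable fun z ↦ WithLp.toLp 2 (φ z)).stronglyMeasurable
    (by fun_prop : Measurable fun z ↦ WithLp.toLp 2 (ψ z)).stronglyMeasurable N hN hφfin hψfin
end
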